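/- Let f : ℝⁿ → ℝ be continuous and positive-valued with epigraph L, and let K ⊆ ℝⁿ × ℝ be a nonempty closed set disjoint from L containing a point (x₀,y₀) with y₀ ≤ 0. Then the upper equidistant function G⁺ : ℝⁿ → ℝ is upper semi-continuous and the lower equidistant function G⁻ : ℝⁿ → ℝ is lower semi-continuous. -/

import Mathlib

open Metric Set

noncomputable section

/-- `ℝⁿ × ℝ` with the Euclidean (ℓ²) metric. -/
abbrev EucProd (n : ℕ) := WithLp 2 (EuclideanSpace ℝ (Fin n) × ℝ)

/-- The point of `ℝⁿ × ℝ` with first component `x` and last coordinate `y`. -/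
def pt {n : ℕ} (x : EuclideanSpace ℝ (Fin n)) (y : ℝ) : EucProd n :=
  (WithLp.equiv 2 (EuclideanSpace ℝ (Fin n) × ℝ)).symm (x, y)

/-- The epigraph of `f : ℝⁿ → ℝ`, viewed as a subset of `ℝⁿ × ℝ`. -/
def epigraph {n : ℕ} (f : EuclideanSpace ℝ (Fin n) → ℝ) : Set (EucProd n) :=
  {p | f ((WithLp.equiv 2 (EuclideanSpace ℝ (Fin n) × ℝ)) p).1 ≤
      ((WithLp.equiv 2 (EuclideanSpace ℝ (Fin n) × ℝ)) p).2}

/-- The upper equidistant function `G⁺` associated with the focal sets `K` and `L`: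
`G⁺(x) = sup {y | d((x,y),K) = d((x,y),L)}`. -/
def Gplus {n : ℕ} (K L : Set (EucProd n)) (x : EuclideanSpace ℝ (Fin n)) : ℝ :=
  sSup {y : ℝ | Metric.infDist (pt x y) K = Metric.infDist (pt x y) L}

/-- The lower equidistant function `G⁻` associated with the focal sets `K` and `L`:
`G⁻(x) = inf {y | d((x,y),K) = d((x,y),L)}`. -/
def Gminus {n : ℕ} (K L : Set (EucProd n)) (x : EuclideanSpace ℝ (Fin n)) : ℝ :=
  sInf {y : ℝ | Metric.infDist (pt x y) K = Metric.infDist (pt x y) L}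

open Filter Topology in
theorem tube_aux {X : Type*} [TopologicalSpace X] (h : X → ℝ → ℝ)
    (hc : Continuous (fun p : X × ℝ => h p.1 p.2)) (a : X) (s : Set ℝ) (hs : IsCompact s)
    (hne : ∀ y ∈ s, h a y ≠ 0) : ∀ᶠ x in 𝓝 a, ∀ y ∈ s, h x y ≠ 0 := by
  apply hs.eventually_forall_of_forall_eventually
  intro y hy
  exact hc.continuousAt.eventually_ne (hne y hy)

open Filter Topology in
theorem usc_aux {X : Type*} [TopologicalSpace X] (h : X → ℝ → ℝ)
    (hc : Continuous (fun p : X × ℝ => h p.1 p.2))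
    (hn : ∀ x, ∃ y, h x y = 0)
    (hb : ∀ a, ∃ M, ∀ᶠ x in 𝓝 a, ∀ y, M ≤ y → h x y ≠ 0) :
    UpperSemicontinuous (fun x => sSup {y | h x y = 0}) := by
  intro a c hac
  obtain ⟨c', h1, h2⟩ := exists_between hac
  obtain ⟨M, hM⟩ := hb a
  have hbd : BddAbove {y | h a y = 0} := by
    refine ⟨M, fun y hy => ?_⟩
    by_contra hlt
    exact hM.self_of_nhds y (not_le.mp hlt).le hy
  have ht := tube_aux h hc a (Icc c' M) isCompact_Icc (by
    intro y hy h0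
    exact absurd (le_csSup hbd h0) (not_le.mpr (h1.trans_le hy.1)))
  filter_upwards [hM, ht] with x hx1 hx2
  refine lt_of_le_of_lt (csSup_le (hn x) ?_) h2
  intro y hy
  by_contra hlt
  rcases le_total M y with hy' | hy'
  · exact hx1 y hy' hy
  · exact hx2 y ⟨(not_le.mp hlt).le, hy'⟩ hy

open Filter Topology in
theorem lsc_aux {X : Type*} [TopologicalSpace X] (h : X → ℝ → ℝ)
    (hc : Continuous (fun p : X × ℝ => h p.1 p.2))
    (hn : ∀ x, ∃ y, h x y = 0)
    (hb : ∀ a, ∃ M, ∀ᶠ x in 𝓝 a, ∀ y, y ≤ M → h x y ≠ 0) :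
    LowerSemicontinuous (fun x => sInf {y | h x y = 0}) := by
  intro a c hac
  obtain ⟨c', h2, h1⟩ := exists_between hac
  obtain ⟨M, hM⟩ := hb a
  have hbd : BddBelow {y | h a y = 0} := by
    refine ⟨M, fun y hy => ?_⟩
    by_contra hlt
    exact hM.self_of_nhds y (not_le.mp hlt).le hy
  have ht := tube_aux h hc a (Icc M c') isCompact_Icc (by
    intro y hy h0
    exact absurd (csInf_le hbd h0) (not_le.mpr (hy.2.trans_lt h1)))
  filter_upwards [hM, ht] with x hx1 hx2
  refine lt_of_lt_of_le h2 (le_csInf (hn x) ?_)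
  intro y hy
  by_contra hlt
  rcases le_total y M with hy' | hy'
  · exact hx1 y hy' hy
  · exact hx2 y ⟨hy', (not_le.mp hlt).le⟩ hy

theorem dist_pt {n : ℕ} (x : EuclideanSpace ℝ (Fin n)) (y : ℝ) (p : EucProd n) :
    dist (pt x y) p = √(dist x p.fst ^ 2 + (y - p.snd) ^ 2) := by
  rw [WithLp.prod_dist_eq_of_L2, Real.dist_eq (WithLp.snd (pt x y)), sq_abs]
  rfl

theorem continuous_pt {n : ℕ} :
    Continuous (fun p : EuclideanSpace ℝ (Fin n) × ℝ => pt p.1 p.2) :=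
  WithLp.prod_continuous_toLp 2 _ _

theorem continuous_pt_right {n : ℕ} (x : EuclideanSpace ℝ (Fin n)) :
    Continuous (fun y : ℝ => pt x y) :=
  continuous_pt.comp (Continuous.prodMk_right x)

open Filter Topology in
theorem below_aux {n : ℕ} (f : EuclideanSpace ℝ (Fin n) → ℝ) (hf : Continuous f)
    (hfpos : ∀ x, 0 < f x) (K : Set (EucProd n))
    (x₀ : EuclideanSpace ℝ (Fin n)) (y₀ : ℝ) (hx₀ : pt x₀ y₀ ∈ K) (hy₀ : y₀ ≤ 0)
    (a : EuclideanSpace ℝ (Fin n)) :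
    ∃ M, ∀ x ∈ ball a 1, ∀ y, y ≤ M →
      infDist (pt x y) K < infDist (pt x y) (epigraph f) := by
  set D := dist a x₀ + 1 with hD
  have hD0 : 0 < D := by positivity
  obtain ⟨z, hz, hzm⟩ := (isCompact_closedBall a (1 + (D + 1))).exists_isMinOn
    ⟨a, mem_closedBall_self (by positivity)⟩ hf.continuousOn
  set m := f z with hm
  have hm0 : 0 < m := hfpos z
  refine ⟨min y₀ (-(D ^ 2 / m)), fun x hx y hy => ?_⟩
  have hyy : y ≤ y₀ := hy.trans (min_le_left _ _)
  have hyD : y ≤ -(D ^ 2 / m) := hy.trans (min_le_right _ _)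
  have hmy : D ^ 2 ≤ -y * m := by
    have : D ^ 2 / m ≤ -y := by linarith
    rwa [div_le_iff₀ hm0] at this
  have hxa : dist x a < 1 := hx
  have hxD : dist x x₀ ≤ D := by linarith [dist_triangle x a x₀]
  have h1 : infDist (pt x y) K ≤ √(D ^ 2 + y ^ 2) := by
    refine (infDist_le_dist_of_mem hx₀).trans ?_
    rw [dist_pt]
    apply Real.sqrt_le_sqrt
    have e1 : dist x x₀ ^ 2 ≤ D ^ 2 := by gcongr
    have e2 : (y - y₀) ^ 2 ≤ y ^ 2 := by nlinarith
    exact add_le_add e1 e2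
  have h2 : √(D ^ 2 + y ^ 2) < √(min ((m - y) ^ 2) ((D + 1) ^ 2 + y ^ 2)) := by
    apply Real.sqrt_lt_sqrt (by positivity)
    rw [lt_min_iff]
    constructor <;> nlinarith [sq_pos_of_pos hD0, sq_pos_of_pos hm0]
  refine h1.trans_lt (h2.trans_le ?_)
  rw [le_infDist ⟨pt a (f a), le_refl (f a)⟩]
  intro p hp
  have hp' : f p.fst ≤ p.snd := hp
  have hp0 := hfpos p.fst
  rw [dist_pt]
  apply Real.sqrt_le_sqrt
  have hy0 : y ≤ 0 := hyy.trans hy₀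
  by_cases hd : dist x p.fst ≤ D + 1
  · refine (min_le_left _ _).trans ?_
    have : m ≤ f p.fst := hzm (by
      rw [mem_closedBall]
      linarith [dist_triangle p.fst x a, dist_comm x p.fst])
    nlinarith [sq_nonneg (dist x p.fst)]
  · refine (min_le_right _ _).trans ?_
    have e1 : (D + 1) ^ 2 ≤ dist x p.fst ^ 2 := by
      have := (not_le.mp hd).le
      gcongr
    nlinarith

theorem stmt4 {n : ℕ} (f : EuclideanSpace ℝ (Fin n) → ℝ) (hf : Continuous f)
    (hfpos : ∀ x, 0 < f x)
    (L : Set (EucProd n)) (hL : L = epigraph f)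
    (K : Set (EucProd n)) (hKcl : IsClosed K) (hKne : K.Nonempty)
    (hdisj : K ∩ L = ∅)
    (x₀ : EuclideanSpace ℝ (Fin n)) (y₀ : ℝ) (hx₀ : pt x₀ y₀ ∈ K) (hy₀ : y₀ ≤ 0) :
    UpperSemicontinuous (Gplus K L) ∧ LowerSemicontinuous (Gminus K L) := by
  subst hL
  have hc : Continuous (fun p : EuclideanSpace ℝ (Fin n) × ℝ =>
      infDist (pt p.1 p.2) K - infDist (pt p.1 p.2) (epigraph f)) :=
    ((continuous_infDist_pt K).comp continuous_pt).sub
      ((continuous_infDist_pt _).comp continuous_pt)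
  have hup : ∀ x y, f x ≤ y →
      0 < infDist (pt x y) K - infDist (pt x y) (epigraph f) := by
    intro x y hxy
    have hmem : pt x y ∈ epigraph f := hxy
    rw [infDist_zero_of_mem hmem, sub_zero]
    refine (hKcl.notMem_iff_infDist_pos hKne).mp fun hk => ?_
    have : pt x y ∈ K ∩ epigraph f := ⟨hk, hmem⟩
    rw [hdisj] at this
    exact this
  have hlow := below_aux f hf hfpos K x₀ y₀ hx₀ hy₀
  have hn : ∀ x, ∃ y, infDist (pt x y) K - infDist (pt x y) (epigraph f) = 0 := by
    intro x
    obtain ⟨M, hM⟩ := hlow x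
    have hcx : Continuous (fun y : ℝ =>
        infDist (pt x y) K - infDist (pt x y) (epigraph f)) :=
      ((continuous_infDist_pt K).comp (continuous_pt_right x)).sub
        ((continuous_infDist_pt _).comp (continuous_pt_right x))
    have hlo := (sub_neg.mpr (hM x (mem_ball_self one_pos) M le_rfl)).le
    have hhi := (hup x (f x) (le_refl (f x))).le
    exact mem_range_of_exists_le_of_exists_ge hcx ⟨M, hlo⟩ ⟨f x, hhi⟩
  constructor
  · have := usc_aux (fun x y => infDist (pt x y) K - infDist (pt x y) (epigraph f)) hc hn (by
      intro a
      refine ⟨f a + 1, ?_⟩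
      filter_upwards [hf.continuousAt.eventually_lt continuousAt_const (lt_add_one (f a))]
        with x hx y hy
      exact (hup x y (hx.le.trans hy)).ne')
    simp only [sub_eq_zero] at this
    exact this
  · have := lsc_aux (fun x y => infDist (pt x y) K - infDist (pt x y) (epigraph f)) hc hn (by
      intro a
      obtain ⟨M, hM⟩ := hlow a
      refine ⟨M, ?_⟩
      filter_upwards [ball_mem_nhds a one_pos] with x hx y hy
      exact (sub_neg.mpr (hM x hx y hy)).ne)
    simp only [sub_eq_zero] at this
    exact this

end
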